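/- Fix integers j and k with k ≥ 1, and an integer l with |l| ≤ k−1 and l ≡ k−1 (mod 2). Let S = [j+2l−(k−1), j+2l+(k−1)]_2. Then F_{j,k}|_S = 0. -/

import Mathlib

/-!
The sum over order ideals vanishes because of a sign-reversing involution. An element `p` of
`P_k` is *free* for an ideal `I` if everything covered by `p` lies in `I` and nothing covering
`p` does; then `p` may be added to or removed from `I`. All elements of `Q_{k+1}` on the line
`r + s = l` carry a variable that is sent to `-1`, so it suffices to show that each ideal has a
free element on that line (`exists_free`), and to toggle one of them. Covering relations link
`Q_k` with `Q_{k+1}`, so the set of free elements of `Q_{k+1}` depends only on `I ∩ Q_k`; it is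
unchanged by the toggle, and a choice made from this set gives an involution.

For the existence, `I ∩ Q_k` is encoded by a height function `h (r, s)`, the largest `t` with
`(r, s, t) ∈ I` (one step below the column if there is none). Heights of diagonally adjacent
columns differ by exactly `2`. Let `D` be the difference of the heights across the line
`r + s = l`, namely `h (r, s + 1) - h (r - 1, s)`. Each value of `D` is `±2`; it is `2` at one end
of the line and `-2` at the other, so it jumps from `2` to `-2` somewhere, and at the jump there is
a free element. (In terms of alternating sign matrices: `I ∩ Q_k` is an alternating sign matrix of
size `k`, free elements of `Q_{k+1}` are its entries `1`, and each row has such an entry.)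
-/

open MvPolynomial
open scoped Classical

noncomputable section

/-- The set `Q_k`: triples `(r,s,t)` with `|r|+|s| ≤ k-2`, `r+s ≡ k (mod 2)`,
`t ≡ 2|s|-k+2 (mod 4)` and `2|s|-k+2 ≤ t ≤ k-2-2|r|`. -/
def pentagramQ (k : ℤ) : Set (ℤ × ℤ × ℤ) :=
  {p | |p.1| + |p.2.1| ≤ k - 2 ∧ (2 : ℤ) ∣ (p.1 + p.2.1 - k) ∧
    (4 : ℤ) ∣ (p.2.2 - (2 * |p.2.1| - k + 2)) ∧
    2 * |p.2.1| - k + 2 ≤ p.2.2 ∧ p.2.2 ≤ k - 2 - 2 * |p.1|}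

/-- The set `P_k = Q_k ∪ Q_{k+1}`. -/
def pentagramP (k : ℤ) : Set (ℤ × ℤ × ℤ) := pentagramQ k ∪ pentagramQ (k + 1)

/-- The covering relation: `(r',s',t')` covers `(r,s,t)` iff `t' = t + 1` and
`|r'-r| + |s'-s| = 1`. -/
def pentagramCovers (x y : ℤ × ℤ × ℤ) : Prop :=
  y.2.2 = x.2.2 + 1 ∧ |y.1 - x.1| + |y.2.1 - x.2.1| = 1

/-- The partial order on `P_k`: the reflexive-transitive closure of the covering
relation within `P_k`. -/
def pentagramLe (k : ℤ) : (ℤ × ℤ × ℤ) → (ℤ × ℤ × ℤ) → Prop :=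
  Relation.ReflTransGen
    (fun x y => x ∈ pentagramP k ∧ y ∈ pentagramP k ∧ pentagramCovers x y)

/-- An order ideal of `P_k`: a downward-closed subset of `P_k`. -/
def IsPentagramOrderIdeal (k : ℤ) (I : Set (ℤ × ℤ × ℤ)) : Prop :=
  I ⊆ pentagramP k ∧ ∀ x y, y ∈ I → pentagramLe k x y → x ∈ I

/-- `P_k` realized as a `Finset` (it is contained in the displayed finite box). -/
def pentagramPFinset (k : ℤ) : Finset (ℤ × ℤ × ℤ) :=
  ((Finset.Icc (-(k-1)) (k-1)) ×ˢ (Finset.Icc (-(k-1)) (k-1)) ×ˢ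
    (Finset.Icc (-(k-1)) (k-1))).filter (fun p => p ∈ pentagramP k)

/-- The F-polynomial `F_{j,k} = Σ_{order ideals I of P_k} Π_{(r,s,t) ∈ I} y_{3r+s+j}`,
as an element of `ℤ[y_i : i ∈ ℤ] = MvPolynomial ℤ ℤ`. -/
def pentagramF (j k : ℤ) : MvPolynomial ℤ ℤ :=
  ∑ I ∈ (pentagramPFinset k).powerset.filter
      (fun I : Finset (ℤ × ℤ × ℤ) => IsPentagramOrderIdeal k (↑I : Set (ℤ × ℤ × ℤ))),
    ∏ p ∈ I, X (3 * p.1 + p.2.1 + j)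

/-- The ring endomorphism of `ℤ[y_i : i ∈ ℤ]` sending `y_i ↦ -1` for `i ∈ S`
and fixing the other variables; `substNeg S F` is `F|_S`. -/
def substNeg (S : Set ℤ) : MvPolynomial ℤ ℤ →+* MvPolynomial ℤ ℤ :=
  (MvPolynomial.aeval
    (fun i : ℤ => if i ∈ S then (-1 : MvPolynomial ℤ ℤ) else X i)).toRingHom

/-- The arithmetic progression `[a,b]_d = {a, a+d, a+2d, …, b}` (as a subset of `ℤ`). -/
def AP (a b d : ℤ) : Set ℤ := {x | a ≤ x ∧ x ≤ b ∧ d ∣ (x - a)}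

/-! ### Order ideals and free elements -/

lemma ideal_of_covers {k : ℤ} {I : Set (ℤ × ℤ × ℤ)} (hI : I ⊆ pentagramP k)
    (h : ∀ x y, x ∈ pentagramP k → y ∈ I → pentagramCovers x y → x ∈ I) :
    IsPentagramOrderIdeal k I := by
  refine ⟨hI, fun x y hy hxy => ?_⟩
  induction hxy with
  | refl => exact hy
  | tail _ hbc ih => exact ih (h _ _ hbc.1 hy hbc.2.2)

lemma ideal_covers {k : ℤ} {I : Set (ℤ × ℤ × ℤ)} (hI : IsPentagramOrderIdeal k I)
    {x y : ℤ × ℤ × ℤ} (hx : x ∈ pentagramP k) (hy : y ∈ I) (hc : pentagramCovers x y) :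
    x ∈ I :=
  hI.2 x y hy (Relation.ReflTransGen.single ⟨hx, hI.1 hy, hc⟩)

/-- `p` can be added to or removed from the ideal `I` of `P_k`: everything covered by `p` lies in
`I`, and nothing covering `p` does. -/
def IsFree (k : ℤ) (I : Set (ℤ × ℤ × ℤ)) (p : ℤ × ℤ × ℤ) : Prop :=
  (∀ x ∈ pentagramP k, pentagramCovers x p → x ∈ I) ∧
    ∀ y ∈ pentagramP k, pentagramCovers p y → y ∉ I

/-- The free elements of `Q_{k+1}` on the line `r + s = l`. -/
def freeSet (k l : ℤ) (I : Set (ℤ × ℤ × ℤ)) : Set (ℤ × ℤ × ℤ) :=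
  {p | p ∈ pentagramQ (k + 1) ∧ p.1 + p.2.1 = l ∧ IsFree k I p}

/-- Add `p` to `I` if it is absent, remove it if it is present. -/
def toggle (p : ℤ × ℤ × ℤ) (I : Finset (ℤ × ℤ × ℤ)) : Finset (ℤ × ℤ × ℤ) :=
  if p ∈ I then I.erase p else insert p I

lemma mem_toggle {p q : ℤ × ℤ × ℤ} {I : Finset (ℤ × ℤ × ℤ)} (h : q ≠ p) :
    q ∈ toggle p I ↔ q ∈ I := by
  unfold toggle; split_ifs <;> simp [h]

lemma toggle_toggle (p : ℤ × ℤ × ℤ) (I : Finset (ℤ × ℤ × ℤ)) : toggle p (toggle p I) = I := by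
  by_cases h : p ∈ I
  · simp [toggle, h]
  · simp [toggle, h]

lemma toggle_ne (p : ℤ × ℤ × ℤ) (I : Finset (ℤ × ℤ × ℤ)) : toggle p I ≠ I := by
  intro h
  by_cases hp : p ∈ I
  · rw [toggle, if_pos hp] at h
    have := Finset.notMem_erase p I
    rw [h] at this
    exact this hp
  · rw [toggle, if_neg hp] at h
    have := Finset.mem_insert_self p I
    rw [h] at this
    exact hp this

/-- A covering relation changes the parity of `r + s`. -/
lemma covers_parity {x y : ℤ × ℤ × ℤ} (h : pentagramCovers x y) :
    ¬ (2 : ℤ) ∣ (x.1 + x.2.1) - (y.1 + y.2.1) := by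
  obtain ⟨-, h⟩ := h
  rcases abs_cases (y.1 - x.1) with h1 | h1 <;> rcases abs_cases (y.2.1 - x.2.1) with h2 | h2 <;>
    omega

lemma toggle_ideal {k : ℤ} {p : ℤ × ℤ × ℤ} {I : Finset (ℤ × ℤ × ℤ)}
    (hI : IsPentagramOrderIdeal k (I : Set (ℤ × ℤ × ℤ))) (hp : p ∈ pentagramP k)
    (hf : IsFree k I p) : IsPentagramOrderIdeal k (toggle p I : Set (ℤ × ℤ × ℤ)) := by
  apply ideal_of_covers
  · intro q hq
    by_cases h : q = p
    · exact h ▸ hp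
    · exact hI.1 ((mem_toggle h).1 hq)
  · intro x y hx hy hc
    have hne : x ≠ y := fun h => by
      have := covers_parity hc
      simp [h] at this
    by_cases hyp : y = p
    · subst hyp
      exact (mem_toggle hne).2 (hf.1 x hx hc)
    · have hyI : y ∈ I := (mem_toggle hyp).1 hy
      by_cases hxp : x = p
      · subst hxp
        exact absurd hyI (hf.2 y (hI.1 hyI) hc)
      · exact (mem_toggle hxp).2 (ideal_covers hI hx hyI hc)

lemma freeSet_toggle {k l : ℤ} {p : ℤ × ℤ × ℤ} {I : Finset (ℤ × ℤ × ℤ)}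
    (hpl : p.1 + p.2.1 = l) : freeSet k l (toggle p I) = freeSet k l I := by
  -- neighbours of an element of the line lie off the line, so they differ from `p`
  ext q
  have key : ∀ x, (pentagramCovers x q ∨ pentagramCovers q x) → q.1 + q.2.1 = l →
      (x ∈ toggle p I ↔ x ∈ I) := by
    intro x hx hq
    apply mem_toggle
    rintro rfl
    rcases hx with hx | hx
    · have := covers_parity hx; omega
    · have := covers_parity hx; omega
  constructor
  · rintro ⟨h1, h2, h3, h4⟩
    exact ⟨h1, h2, fun x hx hc => (key x (.inl hc) h2).1 (h3 x hx hc),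
      fun x hx hc h => h4 x hx hc ((key x (.inr hc) h2).2 h)⟩
  · rintro ⟨h1, h2, h3, h4⟩
    exact ⟨h1, h2, fun x hx hc => (key x (.inl hc) h2).2 (h3 x hx hc),
      fun x hx hc h => h4 x hx hc ((key x (.inr hc) h2).1 h)⟩

/-! ### Heights -/

/-- Membership in `I` extended to all heights `t`: positions below the column of `Q_k` over
`(r, s)` count as members. -/
def ExtMem (k : ℤ) (I : Set (ℤ × ℤ × ℤ)) (r s t : ℤ) : Prop :=
  t ≤ 2 * |s| - k - 2 ∨ (r, s, t) ∈ I

/-- Moving to a diagonally adjacent column and down by `2` preserves membership: the path passes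
through an element of `Q_{k+1}`, which the bounds on `t` place in `P_k`. -/
lemma extMem_diag {k : ℤ} {I : Set (ℤ × ℤ × ℤ)} (hI : IsPentagramOrderIdeal k I)
    {r s t r' s' : ℤ} (hp : (2 : ℤ) ∣ r + s - k) (ht : (4 : ℤ) ∣ t - (2 * |s| - k + 2))
    (hr : |r' - r| = 1) (hs : |s' - s| = 1) (h : ExtMem k I r s t) :
    ExtMem k I r' s' (t - 2) := by
  have hr1 : |r'| ≤ |r| + 1 := by
    have := abs_sub_abs_le_abs_sub r' r; omega
  have hs1 : |s| ≤ |s'| + 1 := by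
    have := abs_sub_abs_le_abs_sub s s'; rw [abs_sub_comm] at this; omega
  have hr2 : 2 ∣ r' - r - 1 := by
    rcases abs_cases (r' - r) with h | h <;> omega
  have hs2 : 2 ∣ s' - s - 1 := by
    rcases abs_cases (s' - s) with h | h <;> omega
  have hs3 : 2 ∣ |s'| - |s| - 1 := by
    rcases abs_cases s with h | h <;> rcases abs_cases s' with h' | h' <;> omega
  by_cases hlow : t - 2 ≤ 2 * |s'| - k - 2
  · exact .inl hlow
  rcases h with h | h
  · omega
  right
  -- the elements of `Q_k` and of `Q_{k+1}` are told apart by the parity of `r + s`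
  have hQ : (r, s, t) ∈ pentagramQ k := by
    rcases hI.1 h with h' | h'
    · exact h'
    · have := h'.2.1; simp only at this; omega
  obtain ⟨q1, q2, q3, q4, q5⟩ := hQ
  simp only at q1 q2 q3 q4 q5
  have hm : (r', s, t - 1) ∈ pentagramP k := by
    right; refine ⟨?_, ?_, ?_, ?_, ?_⟩ <;> simp only <;> omega
  have hmI : (r', s, t - 1) ∈ I :=
    ideal_covers hI hm h ⟨by simp, by simp [abs_sub_comm r r', hr]⟩
  have hn : (r', s', t - 2) ∈ pentagramP k := by
    left; refine ⟨?_, ?_, ?_, ?_, ?_⟩ <;> simp only <;> omega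
  exact ideal_covers hI hn hmI ⟨by simp; ring, by simp [abs_sub_comm s s', hs]⟩

/-- The height `h` of the column over `(r, s)`: among the `t` in the residue class mod `4` of that
column, `ExtMem` holds exactly for `t ≤ h`. -/
lemma exists_height {k : ℤ} {I : Set (ℤ × ℤ × ℤ)} (hI : IsPentagramOrderIdeal k I)
    (r s : ℤ) (hp : (2 : ℤ) ∣ r + s - k) :
    ∃ h : ℤ, (4 : ℤ) ∣ h - (2 * |s| - k + 2) ∧ 2 * |s| - k - 2 ≤ h ∧
      (h = 2 * |s| - k - 2 ∨ h ≤ k - 2 - 2 * |r|) ∧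
      ∀ t, (4 : ℤ) ∣ t - (2 * |s| - k + 2) → (ExtMem k I r s t ↔ t ≤ h) := by
  have hup : ∀ t, ExtMem k I r s t → t ≤ 2 * |s| - k - 2 ∨ t ≤ k - 2 - 2 * |r| := by
    rintro t (h | h)
    · exact .inl h
    · right
      rcases hI.1 h with h' | h'
      · exact h'.2.2.2.2
      · have := h'.2.1; simp only at this; omega
  obtain ⟨h, ⟨h1, h2⟩, h3⟩ := Int.exists_greatest_of_bdd
    (P := fun t => (4 : ℤ) ∣ t - (2 * |s| - k + 2) ∧ ExtMem k I r s t)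
    ⟨max (2 * |s| - k - 2) (k - 2 - 2 * |r|), fun z hz => by
      rcases hup z hz.2 with h | h
      · exact le_max_of_le_left h
      · exact le_max_of_le_right h⟩
    ⟨2 * |s| - k - 2, by omega, .inl le_rfl⟩
  have hlow : 2 * |s| - k - 2 ≤ h := h3 _ ⟨by omega, .inl le_rfl⟩
  refine ⟨h, h1, hlow, ?_, fun t ht => ⟨fun h' => h3 t ⟨ht, h'⟩, fun hth => ?_⟩⟩
  · rcases hup h h2 with h | h
    · left; omega
    · exact .inr h
  -- two diagonal steps, out and back, go down by `4` in the same column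
  · have step : ∀ t, (4 : ℤ) ∣ t - (2 * |s| - k + 2) → ExtMem k I r s t →
        ExtMem k I r s (t - 4) := by
      intro t ht h
      have e := extMem_diag hI (r' := r + 1) (s' := s + 1) hp ht (by simp) (by simp) h
      have hs3 : 2 ∣ |s + 1| - |s| - 1 := by
        rcases abs_cases s with h | h <;> rcases abs_cases (s + 1) with h' | h' <;> omega
      have e2 := extMem_diag hI (r' := r) (s' := s) (by omega) (by omega) (by simp) (by simp) e
      rwa [show t - 2 - 2 = t - 4 by ring] at e2
    obtain ⟨m, hm⟩ : (4 : ℤ) ∣ h - t := by omega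
    have all : ∀ n : ℕ, ExtMem k I r s (h - 4 * n) := by
      intro n
      induction n with
      | zero => simpa using h2
      | succ n ih =>
        have := step _ (by omega) ih
        rwa [show h - 4 * (n : ℤ) - 4 = h - 4 * ((n + 1 : ℕ) : ℤ) by push_cast; ring] at this
    have := all m.toNat
    rwa [show h - 4 * (m.toNat : ℤ) = t by omega] at this

/-- Each ideal has a free element on the line `r + s = l`, found where the height difference across
the line drops from `2` to `-2`. -/
lemma exists_free {k l : ℤ} (hk : 1 ≤ k) (hl : |l| ≤ k - 1) (hpar : (2 : ℤ) ∣ (l - (k - 1)))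
    {I : Set (ℤ × ℤ × ℤ)} (hI : IsPentagramOrderIdeal k I) : (freeSet k l I).Nonempty := by
  choose! h h1 h2 h3 h4 using fun r s => exists_height hI r s
  obtain ⟨hl1, hl2⟩ := abs_le.1 hl
  have adj1 : ∀ r s r' s', (2 : ℤ) ∣ r + s - k → |r' - r| = 1 → |s' - s| = 1 →
      h r s - 2 ≤ h r' s' := by
    intro r s r' s' hp hr hs
    have hr2 : 2 ∣ r' - r - 1 := by
      rcases abs_cases (r' - r) with h | h <;> omega
    have hs2 : 2 ∣ s' - s - 1 := by
      rcases abs_cases (s' - s) with h | h <;> omega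
    have hs3 : 2 ∣ |s'| - |s| - 1 := by
      rcases abs_cases s with h | h <;> rcases abs_cases s' with h' | h' <;> omega
    have hp' : (2 : ℤ) ∣ r' + s' - k := by omega
    have a1 := h1 r s hp
    exact (h4 r' s' hp' _ (by omega)).1
      (extMem_diag hI hp a1 hr hs ((h4 r s hp _ a1).2 le_rfl))
  have adj : ∀ r s r' s', (2 : ℤ) ∣ r + s - k → |r' - r| = 1 → |s' - s| = 1 →
      h r' s' = h r s - 2 ∨ h r' s' = h r s + 2 := by
    intro r s r' s' hp hr hs
    have hr2 : 2 ∣ r' - r - 1 := by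
      rcases abs_cases (r' - r) with h | h <;> omega
    have hs2 : 2 ∣ s' - s - 1 := by
      rcases abs_cases (s' - s) with h | h <;> omega
    have hs3 : 2 ∣ |s'| - |s| - 1 := by
      rcases abs_cases s with h | h <;> rcases abs_cases s' with h' | h' <;> omega
    have hp' : (2 : ℤ) ∣ r' + s' - k := by omega
    have a1 := h1 r s hp
    have a2 := h1 r' s' hp'
    have b1 := adj1 r s r' s' hp hr hs
    have b2 := adj1 r' s' r s hp' (by rw [abs_sub_comm]; exact hr) (by rw [abs_sub_comm]; exact hs)
    omega
  -- columns over the boundary `|r| + |s| = k` are empty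
  have bd : ∀ r s, (2 : ℤ) ∣ r + s - k → |r| + |s| = k → h r s = 2 * |s| - k - 2 := by
    intro r s hp hrs
    have := h2 r s hp
    have := h3 r s hp
    omega
  obtain ⟨m, hm⟩ := hpar
  -- the line consists of the points `(m + n, l - m - n)` with `0 ≤ n ≤ k - 1`
  obtain ⟨n, hnk, hn0, hn1⟩ : ∃ n : ℕ, (n : ℤ) < k ∧
      h (m + n) (l - m - n + 1) - h (m + n - 1) (l - m - n) = 2 ∧
      h (m + n + 1) (l - m - n) - h (m + n) (l - m - n - 1) ≠ 2 := by
    by_contra! hcon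
    have all : ∀ n : ℕ, (n : ℤ) ≤ k →
        h (m + n) (l - m - n + 1) - h (m + n - 1) (l - m - n) = 2 := by
      intro n hnk
      induction n with
      | zero =>
        have e1 := bd m (l - m + 1) (by omega)
          (by rw [abs_of_nonpos (by omega), abs_of_nonneg (by omega)]; omega)
        have e2 := bd (m - 1) (l - m) (by omega)
          (by rw [abs_of_nonpos (by omega), abs_of_nonneg (by omega)]; omega)
        rw [abs_of_nonneg (by omega)] at e1 e2
        simp only [Nat.cast_zero, add_zero, sub_zero]
        omega
      | succ n ih =>
        have := hcon n (by omega) (ih (by omega))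
        push_cast
        rwa [show m + ((n : ℤ) + 1) = m + n + 1 by ring,
          show l - m - ((n : ℤ) + 1) + 1 = l - m - n by ring,
          show m + (n : ℤ) + 1 - 1 = m + n by ring,
          show l - m - ((n : ℤ) + 1) = l - m - n - 1 by ring]
    have hlast := all k.toNat (by omega)
    rw [show ((k.toNat : ℕ) : ℤ) = k by omega] at hlast
    have e1 := bd (m + k) (l - m - k + 1) (by omega)
      (by rw [abs_of_nonneg (by omega), abs_of_nonpos (by omega)]; omega)
    have e2 := bd (m + k - 1) (l - m - k) (by omega)
      (by rw [abs_of_nonneg (by omega), abs_of_nonpos (by omega)]; omega)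
    rw [abs_of_nonpos (by omega)] at e1 e2
    omega
  obtain ⟨r, hr⟩ : ∃ r, r = m + n := ⟨_, rfl⟩
  obtain ⟨s, hs⟩ : ∃ s, s = l - m - n := ⟨_, rfl⟩
  rw [← hr, ← hs] at hn0 hn1
  have hrs : r + s = l := by omega
  -- the four heights around the jump are `c`, `c`, `c - 2`, `c - 2` with `c = h r (s + 1)`
  have d1 := adj (r - 1) s r (s + 1) (by omega) (by simp) (by simp)
  have d2 := adj r (s - 1) (r + 1) s (by omega) (by simp) (by simp)
  have d3 := adj r (s + 1) (r + 1) s (by omega) (by simp) (by simp)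
  have d4 := adj (r - 1) s r (s - 1) (by omega) (by simp) (by simp)
  have c1 : h r (s - 1) = h r (s + 1) := by omega
  have c2 : h (r + 1) s = h r (s + 1) - 2 := by omega
  have c3 : h (r - 1) s = h r (s + 1) - 2 := by omega
  have par : ∀ a : ℤ, (2 : ℤ) ∣ |a| - a := fun a => by
    rcases abs_cases a with h | h <;> omega
  have ps := par s
  have ps1 := par (s + 1)
  have ps2 := par (s - 1)
  have g1 := h1 r (s + 1) (by omega)
  have lo1 := h2 (r + 1) s (by omega)
  have up1 := h3 r (s + 1) (by omega)
  have up2 := h3 r (s - 1) (by omega)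
  have up3 := h3 (r + 1) s (by omega)
  have up4 := h3 (r - 1) s (by omega)
  have hQ : (r, s, h r (s + 1) + 1) ∈ pentagramQ (k + 1) := by
    have hlow : 2 * |s| - k + 1 ≤ h r (s + 1) + 1 := by omega
    have hupp : h r (s + 1) + 1 ≤ k - 1 - 2 * |r| := by
      have hrk : |r| + |s| ≤ k - 1 := by
        rcases abs_cases r with h | h <;> rcases abs_cases s with h' | h' <;> omega
      have hs1 : |s + 1| ≤ |s| + 1 := by
        have := abs_add_le s 1; rwa [abs_one] at this
      omega
    refine ⟨?_, ?_, ?_, ?_, ?_⟩ <;> simp only <;> omega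
  refine ⟨(r, s, h r (s + 1) + 1), hQ, hrs, ?_, ?_⟩
  -- below: the neighbours of matching height are those over `(r, s ± 1)`
  · rintro ⟨r', s', t'⟩ hx ⟨hc1, hc2⟩
    simp only at hc1 hc2
    have hx : (r', s', t') ∈ pentagramQ k := by
      rcases hx with hx | hx
      · exact hx
      · have := hx.2.1
        simp only at this
        rcases abs_cases (r - r') with h | h <;> rcases abs_cases (s - s') with h' | h' <;> omega
    obtain ⟨-, q2, q3, q4, -⟩ := hx
    simp only at q2 q3 q4
    have ps3 := par s'
    have hr' : r' = r := by
      rcases abs_cases (r - r') with h | h <;> rcases abs_cases (s - s') with h' | h' <;> omega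
    have hs' : s' = s + 1 ∨ s' = s - 1 := by
      rcases abs_cases (r - r') with h | h <;> rcases abs_cases (s - s') with h' | h' <;> omega
    have ht : t' ≤ h r' s' := by
      rcases hs' with rfl | rfl <;> subst hr' <;> omega
    rcases (h4 r' s' q2 t' q3).2 ht with h | h
    · omega
    · exact h
  -- above: the neighbours of matching height are those over `(r ± 1, s)`
  · rintro ⟨r', s', t'⟩ hx ⟨hc1, hc2⟩ hxI
    simp only at hc1 hc2
    have hx : (r', s', t') ∈ pentagramQ k := by
      rcases hx with hx | hx
      · exact hx
      · have := hx.2.1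
        simp only at this
        rcases abs_cases (r' - r) with h | h <;> rcases abs_cases (s' - s) with h' | h' <;> omega
    obtain ⟨-, q2, q3, -, -⟩ := hx
    simp only at q2 q3
    have ps3 := par s'
    have hs' : s' = s := by
      rcases abs_cases (r' - r) with h | h <;> rcases abs_cases (s' - s) with h' | h' <;> omega
    have hr' : r' = r + 1 ∨ r' = r - 1 := by
      rcases abs_cases (r' - r) with h | h <;> rcases abs_cases (s' - s) with h' | h' <;> omega
    have ht := (h4 r' s' q2 t' q3).1 (.inr hxI)
    have he : h r' s' = h r (s + 1) - 2 := by
      rw [hs']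
      rcases hr' with h | h <;> rw [h] <;> assumption
    omega

/-! ### The involution -/

/-- A free element of `I` on the line `r + s = l`, chosen as a function of the set of all of them. -/
def pick (k l : ℤ) (I : Set (ℤ × ℤ × ℤ)) : ℤ × ℤ × ℤ :=
  if h : (freeSet k l I).Nonempty then h.some else 0

lemma pick_mem {k l : ℤ} {I : Set (ℤ × ℤ × ℤ)} (h : (freeSet k l I).Nonempty) :
    pick k l I ∈ freeSet k l I := by
  rw [pick, dif_pos h]; exact h.some_mem

lemma pick_congr {k l : ℤ} {I J : Set (ℤ × ℤ × ℤ)} (h : freeSet k l I = freeSet k l J) :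
    pick k l I = pick k l J := by
  unfold pick; rw [h]

lemma mem_PFinset {k : ℤ} {p : ℤ × ℤ × ℤ} (hp : p ∈ pentagramP k) : p ∈ pentagramPFinset k := by
  obtain ⟨r, s, t⟩ := p
  have hp' := hp
  have h1 := abs_nonneg r
  have h2 := abs_nonneg s
  have h3 := neg_abs_le r
  have h4 := neg_abs_le s
  have h5 := le_abs_self r
  have h6 := le_abs_self s
  simp only [pentagramPFinset, Finset.mem_filter, Finset.mem_product, Finset.mem_Icc]
  refine ⟨?_, hp⟩
  rcases hp' with ⟨q1, q2, q3, q4, q5⟩ | ⟨q1, q2, q3, q4, q5⟩ <;> simp only at q1 q2 q3 q4 q5 <;>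
    omega

theorem stmt1 (j k l : ℤ) (hk : 1 ≤ k) (hl : |l| ≤ k - 1) (hpar : (2 : ℤ) ∣ (l - (k - 1))) :
    substNeg (AP (j + 2 * l - (k - 1)) (j + 2 * l + (k - 1)) 2) (pentagramF j k) = 0 := by
  set S := AP (j + 2 * l - (k - 1)) (j + 2 * l + (k - 1)) 2 with hS
  rw [pentagramF, map_sum]
  simp only [map_prod]
  set f : ℤ × ℤ × ℤ → MvPolynomial ℤ ℤ := fun p => substNeg S (X (3 * p.1 + p.2.1 + j)) with hf
  have hneg : ∀ p ∈ pentagramQ (k + 1), p.1 + p.2.1 = l → f p = -1 := by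
    rintro ⟨r, s, t⟩ ⟨q1, q2, -, -, -⟩ hrs
    simp only at q1 q2 hrs
    have hmem : 3 * r + s + j ∈ S := by
      rw [hS]
      have h3 := neg_abs_le r
      have h4 := neg_abs_le s
      have h5 := le_abs_self r
      have h6 := le_abs_self s
      refine ⟨?_, ?_, ?_⟩ <;> omega
    simp [hf, substNeg, hmem]
  have hp : ∀ I ∈ (pentagramPFinset k).powerset.filter
      (fun I : Finset (ℤ × ℤ × ℤ) => IsPentagramOrderIdeal k (↑I : Set (ℤ × ℤ × ℤ))),
      pick k l I ∈ freeSet k l (I : Set (ℤ × ℤ × ℤ)) := fun I hI =>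
    pick_mem (exists_free hk hl hpar (Finset.mem_filter.1 hI).2)
  refine Finset.sum_involution (fun I _ => toggle (pick k l I) I) ?_ ?_ ?_ ?_
  · intro I hI
    obtain ⟨h1, h2, -⟩ := hp I hI
    have hw := hneg _ h1 h2
    change ∏ p ∈ I, f p + ∏ p ∈ toggle (pick k l I) I, f p = 0
    by_cases hm : pick k l I ∈ I
    · rw [toggle, if_pos hm, ← Finset.mul_prod_erase I f hm, hw]
      ring
    · rw [toggle, if_neg hm, Finset.prod_insert hm, hw]
      ring
  · intro I hI _
    exact toggle_ne _ _
  · intro I hI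
    obtain ⟨h1, h2, h3⟩ := hp I hI
    have hid := toggle_ideal (Finset.mem_filter.1 hI).2 (.inr h1) h3
    exact Finset.mem_filter.2
      ⟨Finset.mem_powerset.2 fun q hq => mem_PFinset (hid.1 hq), hid⟩
  · intro I hI
    have : pick k l (toggle (pick k l I) I : Finset _) = pick k l I :=
      pick_congr (freeSet_toggle (hp I hI).2.1)
    simp only [this, toggle_toggle]

end
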